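/- arXiv:2011.02936 — 2 statements merged into one kernel-verified Lean document; each statement's English description precedes it below -/
import Mathlib

section
/- Let H be a Hilbert space and L̃ : [0,∞) → L(H) continuous with L̃(0) = 0, of class C¹ on (0,∞), and such that ‖s L̃'(s)‖ → 0 as s → 0⁺. Then the map N : H → H defined by N(x) = L̃(|x|) x is Fréchet C¹ on all of H with DN(0) = 0. -/
noncomputable section

lemma aux_deriv {E : Type*} [NormedAddCommGroup E] [InnerProductSpace ℝ E]
    (L : ℝ → E →L[ℝ] E) (hC1 : ContDiffOn ℝ 1 L (Set.Ioi 0)) (x : E) (hx : x ≠ 0) :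
    ‖fderiv ℝ (fun x : E => L ‖x‖ x) x‖ ≤ ‖L ‖x‖‖ + ‖‖x‖ • deriv L ‖x‖‖ := by
  have hpos : 0 < ‖x‖ := norm_pos_iff.mpr hx
  have hL : DifferentiableAt ℝ L ‖x‖ :=
    (hC1.contDiffAt (Ioi_mem_nhds hpos)).differentiableAt (by simp)
  have hn : DifferentiableAt ℝ (fun x : E => ‖x‖) x :=
    (contDiffAt_norm ℝ hx (n := 1)).differentiableAt (by simp)
  have hD : ‖fderiv ℝ (fun x : E => ‖x‖) x‖ ≤ 1 := by
    simpa using norm_fderiv_le_of_lipschitz ℝ (lipschitzWith_one_norm (E := E)) (x₀ := x)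
  have hc : HasFDerivAt (fun x : E => L ‖x‖)
      ((fderiv ℝ (fun x : E => ‖x‖) x).smulRight (deriv L ‖x‖)) x := by
    have := hL.hasDerivAt.hasFDerivAt.comp x hn.hasFDerivAt
    refine this.congr_fderiv ?_
    ext y z
    simp
  have h := (hc.clm_apply (hasFDerivAt_id x)).fderiv
  have h' : fderiv ℝ (fun x : E => L ‖x‖ x) x = _ := h
  rw [h']
  refine ContinuousLinearMap.opNorm_le_bound _ (by positivity) fun y => ?_
  have e : ‖(fderiv ℝ (fun x : E => ‖x‖) x) y‖ ≤ ‖y‖ := by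
    simpa using ContinuousLinearMap.le_of_opNorm_le _ hD y
  have e2 : ‖(deriv L ‖x‖) x‖ ≤ ‖deriv L ‖x‖‖ * ‖x‖ := ContinuousLinearMap.le_opNorm _ _
  have e3 : ‖L ‖x‖ y‖ ≤ ‖L ‖x‖‖ * ‖y‖ := ContinuousLinearMap.le_opNorm _ _
  have e4 : ‖(fderiv ℝ (fun x : E => ‖x‖) x y) • (deriv L ‖x‖) x‖
      ≤ ‖y‖ * (‖deriv L ‖x‖‖ * ‖x‖) := by
    rw [norm_smul]; gcongr
  calc _ = ‖L ‖x‖ y + (fderiv ℝ (fun x : E => ‖x‖) x y) • (deriv L ‖x‖) x‖ := by simp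
    _ ≤ _ := norm_add_le _ _
    _ ≤ _ := add_le_add e3 e4
    _ = _ := by rw [norm_smul, norm_norm]; ring

/-- if $L̃ : [0,∞) → L(H)$ is continuous with $L̃(0) = 0$, of class $C^1$
on $(0,∞)$, and $‖sL̃'(s)‖ → 0$ as $s → 0^+$, then $N(x) = L̃(|x|)x$ is Fréchet $C^1$ on
all of $H$ with $DN(0) = 0$. -/
theorem stmt12 {E : Type*} [NormedAddCommGroup E] [InnerProductSpace ℝ E] [CompleteSpace E]
    (L : ℝ → E →L[ℝ] E)
    (hcont : ContinuousOn L (Set.Ici 0)) (h0 : L 0 = 0)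
    (hC1 : ContDiffOn ℝ 1 L (Set.Ioi 0))
    (hder : Filter.Tendsto (fun s : ℝ => ‖s • deriv L s‖)
      (nhdsWithin 0 (Set.Ioi 0)) (nhds 0)) :
    ContDiff ℝ 1 (fun x : E => L ‖x‖ x) ∧ fderiv ℝ (fun x : E => L ‖x‖ x) 0 = 0 := by
  have hLc : Continuous (fun x : E => L ‖x‖) :=
    hcont.comp_continuous continuous_norm fun x => norm_nonneg x
  have hL0 : Filter.Tendsto (fun x : E => ‖L ‖x‖‖) (nhds 0) (nhds 0) := by
    have := hLc.norm.tendsto 0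
    simpa [h0] using this
  have hd0 : HasFDerivAt (fun x : E => L ‖x‖ x) (0 : E →L[ℝ] E) 0 := by
    rw [hasFDerivAt_iff_isLittleO_nhds_zero, Asymptotics.isLittleO_iff]
    intro c hc
    filter_upwards [hL0.eventually (gt_mem_nhds hc)] with x hx
    simp only [zero_add, norm_zero, h0, ContinuousLinearMap.zero_apply, sub_zero]
    exact ContinuousLinearMap.le_of_opNorm_le _ hx.le x
  have hx1 : ∀ x : E, x ≠ 0 → ContDiffAt ℝ 1 (fun x : E => L ‖x‖ x) x := by
    intro x hx
    have hpos : 0 < ‖x‖ := norm_pos_iff.mpr hx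
    have h1 : ContDiffAt ℝ 1 (fun x : E => L ‖x‖) x :=
      (hC1.contDiffAt (Ioi_mem_nhds hpos)).comp x (contDiffAt_norm ℝ hx)
    exact h1.clm_apply contDiffAt_id
  refine ⟨?_, hd0.fderiv⟩
  rw [contDiff_one_iff_fderiv]
  constructor
  · intro x
    by_cases hx : x = 0
    · subst hx; exact hd0.differentiableAt
    · exact (hx1 x hx).differentiableAt (by simp)
  · rw [continuous_iff_continuousAt]
    intro x
    by_cases hx : x = 0
    · subst hx
      rw [continuousAt_iff_punctured_nhds, hd0.fderiv]
      have hn : Filter.Tendsto (fun x : E => ‖x‖) (nhdsWithin 0 {0}ᶜ)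
          (nhdsWithin 0 (Set.Ioi 0)) := tendsto_norm_nhdsNE_zero
      have ht := (hL0.mono_left nhdsWithin_le_nhds).add (hder.comp hn)
      rw [add_zero] at ht
      refine squeeze_zero_norm' ?_ ht
      filter_upwards [self_mem_nhdsWithin] with y hy
      exact aux_deriv L hC1 y hy
    · exact ((hx1 x hx).fderiv_right (m := 0) (by simp)).continuousAt
end
end

section
/- (Main theorem) There exists a map F : ℓ² → ℓ² of class C¹ in the Fréchet sense with F(0) = 0, such that the spectrum of DF(0) intersects the open half-plane Re(z) > 0 (so the origin is linearly unstable), yet the origin is globally asymptotically stable in the sense of Lyapunov for the flow of x' = F(x); moreover F is globally Lipschitz, so this flow is globally defined for all t ∈ ℝ. -/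
noncomputable section

/-- The Hilbert space ℓ². -/
abbrev H : Type := lp (fun _ : ℕ => ℂ) 2

open Set Filter Topology Manifold in
theorem aux_global {E : Type} [NormedAddCommGroup E] [NormedSpace ℝ E] [CompleteSpace E]
    (F : E → E) (h0 : F 0 = 0) (hF : ContDiff ℝ 1 F) (K : NNReal) (hK : LipschitzWith K F) (x₀ : E) :
    ∃ x : ℝ → E, x 0 = x₀ ∧ ∀ t : ℝ, HasDerivAt x (F (x t)) t := by
  have hv : ContMDiff 𝓘(ℝ, E) 𝓘(ℝ, E).tangent 1
      (fun x : E => (⟨x, F x⟩ : TangentBundle 𝓘(ℝ, E) E)) :=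
    contMDiff_vectorSpace_iff_contDiff.2 hF
  have hε : (0 : ℝ) < 1 / (2 * ((K : ℝ) + 1)) := by positivity
  obtain ⟨x, hx, hx'⟩ := exists_isMIntegralCurve_of_isMIntegralCurveOn (I := 𝓘(ℝ, E)) (v := F) hv hε
    (by
      intro y
      set ε : ℝ := 1 / (2 * ((K : ℝ) + 1)) with hεd
      have hP : IsPicardLindelof (fun _ : ℝ => F) (tmin := -ε) (tmax := ε)
          ⟨0, by constructor <;> linarith⟩ y (‖y‖₊ + 1) 0 (K * (2 * ‖y‖₊ + 1)) K := by
        refine ⟨fun t _ => hK.lipschitzOnWith, fun x _ => continuousOn_const, ?_, ?_⟩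
        · intro t _ z hz
          have h1 := hK.dist_le_mul z 0
          rw [h0, dist_zero_right, dist_zero_right] at h1
          rw [mem_closedBall_iff_norm] at hz
          have h2 : ‖z‖ ≤ ‖y‖ + ‖z - y‖ := by
            calc ‖z‖ = ‖y + (z - y)‖ := by congr 1; abel
              _ ≤ _ := norm_add_le _ _
          push_cast at hz ⊢
          refine h1.trans ?_
          gcongr
          linarith
        · simp only [sub_zero, zero_sub, neg_neg, max_self, NNReal.coe_zero]
          push_cast
          rw [hεd, mul_one_div, div_le_iff₀ (by positivity)]
          have := norm_nonneg y
          have := K.2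
          have h3 : (0:ℝ) ≤ (K:ℝ) := K.2
          nlinarith
      obtain ⟨α, hα0, hα⟩ := hP.exists_eq_forall_mem_Icc_hasDerivWithinAt₀
      refine ⟨α, hα0, ?_⟩
      intro t ht
      have := (hα t (Ioo_subset_Icc_self ht)).mono Ioo_subset_Icc_self
      exact this.hasFDerivWithinAt.hasMFDerivWithinAt) x₀
  refine ⟨x, hx, fun t => ?_⟩
  have h : HasFDerivAt x ((1 : ℝ →L[ℝ] ℝ).smulRight (F (x t))) t := (hx' t).hasFDerivAt
  simpa using h.hasDerivAt

def rho (u : ℝ) : ℝ := Real.smoothTransition (2 - 2 * u)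

theorem rho_contDiff : ContDiff ℝ 1 rho := by
  unfold rho
  exact (Real.smoothTransition.contDiff (n := 1)).comp (by fun_prop)

theorem rho_nonneg (u : ℝ) : 0 ≤ rho u := Real.smoothTransition.nonneg _
theorem rho_le_one (u : ℝ) : rho u ≤ 1 := Real.smoothTransition.le_one _
theorem rho_zero_of (u : ℝ) (h : 1 ≤ u) : rho u = 0 :=
  Real.smoothTransition.zero_of_nonpos (by linarith)
theorem rho_zero : rho 0 = 1 := Real.smoothTransition.one_of_one_le (by norm_num)

theorem rho_hasDerivAt (u : ℝ) : HasDerivAt rho (deriv rho u) u :=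
  (rho_contDiff.differentiable (by norm_num) u).hasDerivAt

theorem rho_bound : ∃ M : ℝ, 0 ≤ M ∧ ∀ u : ℝ, 0 ≤ u → |deriv rho u| * u ≤ M := by
  have hc : Continuous (deriv rho) := rho_contDiff.continuous_deriv (by norm_num)
  obtain ⟨M, hM⟩ := (isCompact_Icc (a := (0:ℝ)) (b := 1)).exists_bound_of_continuousOn
    hc.continuousOn
  have hM0 : 0 ≤ M := (norm_nonneg _).trans (hM 0 (by simp))
  refine ⟨M, hM0, fun u hu => ?_⟩
  rcases le_or_gt u 1 with h | h
  · have := hM u ⟨hu, h⟩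
    rw [Real.norm_eq_abs] at this
    nlinarith [abs_nonneg (deriv rho u)]
  · have : deriv rho u = 0 := by
      have : rho =ᶠ[nhds u] fun _ => 0 := by
        filter_upwards [lt_mem_nhds h] with v hv
        exact rho_zero_of v hv.le
      rw [this.deriv_eq]; simp
    rw [this]; simpa using hM0

section abs
variable {E : Type} [NormedAddCommGroup E] [InnerProductSpace ℝ E]

/-- derivative of the cut-off term -/
def dterm (s : ℝ) (L : E →L[ℝ] E) (x : E) : E →L[ℝ] E :=
  rho (s * ‖x‖ ^ 2) • L +
    ((deriv rho (s * ‖x‖ ^ 2) * s * 2) • innerSL ℝ x).smulRight (L x)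

theorem dterm_hasFDerivAt (s : ℝ) (L : E →L[ℝ] E) (x : E) :
    HasFDerivAt (fun x => rho (s * ‖x‖ ^ 2) • L x) (dterm s L x) x := by
  have h1 : HasFDerivAt (fun x : E => ‖x‖ ^ 2) (2 • innerSL ℝ x) x :=
    (hasStrictFDerivAt_norm_sq x).hasFDerivAt
  have h2 := (rho_hasDerivAt (s * ‖x‖ ^ 2)).comp_hasFDerivAt x (h1.const_mul s)
  have h3 := h2.smul (L.hasFDerivAt (x := x))
  refine h3.congr_fderiv ?_
  ext h
  simp [dterm, mul_assoc, mul_comm, mul_left_comm]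

theorem dterm_continuous (s : ℝ) (L : E →L[ℝ] E) : Continuous (dterm s L) := by
  have hc : Continuous (deriv rho) := rho_contDiff.continuous_deriv (by norm_num)
  have hr : Continuous rho := rho_contDiff.continuous
  have h1 : Continuous fun x : E => innerSL ℝ x := (innerSL ℝ (E := E)).continuous
  have h2 : Continuous fun x : E => (deriv rho (s * ‖x‖ ^ 2) * s * 2) • innerSL ℝ x :=
    Continuous.smul ((((hc.comp (by fun_prop : Continuous fun x : E => s * ‖x‖ ^ 2))).mul
      continuous_const).mul continuous_const) h1
  unfold dterm
  refine Continuous.add (Continuous.smul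
    (hr.comp (by fun_prop : Continuous fun x : E => s * ‖x‖ ^ 2)) continuous_const) ?_
  exact ((ContinuousLinearMap.smulRightL ℝ E E).continuous.comp h2).clm_apply L.continuous

theorem dterm_zero (s : ℝ) (L : E →L[ℝ] E) : dterm s L 0 = L := by
  ext h; simp [dterm, rho_zero]

theorem dterm_bound (M : ℝ) (hM : ∀ u : ℝ, 0 ≤ u → |deriv rho u| * u ≤ M) (s : ℝ) (hs : 0 ≤ s)
    (L : E →L[ℝ] E) (x : E) : ‖dterm s L x‖ ≤ (1 + 2 * M) * ‖L‖ := by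
  unfold dterm
  have hu := hM (s * ‖x‖ ^ 2) (by positivity)
  calc _ ≤ _ := norm_add_le _ _
    _ ≤ 1 * ‖L‖ + 2 * (|deriv rho (s * ‖x‖ ^ 2)| * (s * ‖x‖ ^ 2)) * ‖L‖ := by
      gcongr
      · rw [norm_smul]
        gcongr
        rw [Real.norm_eq_abs, abs_of_nonneg (rho_nonneg _)]
        exact rho_le_one _
      · rw [ContinuousLinearMap.norm_smulRight_apply, norm_smul, innerSL_apply_norm]
        have := L.le_opNorm x
        rw [Real.norm_eq_abs, abs_mul, abs_mul, abs_of_nonneg hs, abs_two]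
        calc _ ≤ |deriv rho (s * ‖x‖ ^ 2)| * s * 2 * ‖x‖ * (‖L‖ * ‖x‖) := by gcongr
          _ = _ := by ring
    _ ≤ 1 * ‖L‖ + 2 * M * ‖L‖ := by gcongr
    _ = _ := by ring

open Set in
theorem aux_decay (T : E →L[ℝ] E) (x g : ℝ → E) (s t : ℝ) (hst : s ≤ t)
    (hx : ∀ τ, HasDerivAt x (-x τ + g τ) τ)
    (hg : ∀ τ ∈ Icc s t, ‖T (g τ)‖ ≤ 1 / 2 * ‖T (x τ)‖) :
    ‖T (x t)‖ ≤ Real.exp (-(t - s) / 2) * ‖T (x s)‖ := by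
  have hd : ∀ τ, HasDerivAt (fun τ => Real.exp τ * ‖T (x τ)‖ ^ 2)
      (Real.exp τ * ‖T (x τ)‖ ^ 2 + Real.exp τ * (2 * inner ℝ (T (x τ)) (T (-x τ + g τ)))) τ := by
    intro τ
    exact (Real.hasDerivAt_exp τ).mul ((T.hasFDerivAt.comp_hasDerivAt τ (hx τ)).norm_sq)
  have hanti : AntitoneOn (fun τ => Real.exp τ * ‖T (x τ)‖ ^ 2) (Icc s t) := by
    refine antitoneOn_of_deriv_nonpos (convex_Icc s t)
      (fun τ _ => (hd τ).continuousAt.continuousWithinAt)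
      (fun τ _ => (hd τ).differentiableAt.differentiableWithinAt) ?_
    intro τ hτ
    rw [interior_Icc] at hτ
    rw [(hd τ).deriv, ← mul_add]
    refine mul_nonpos_of_nonneg_of_nonpos (Real.exp_pos _).le ?_
    rw [map_add, map_neg, inner_add_right, inner_neg_right, real_inner_self_eq_norm_sq]
    have h1 := real_inner_le_norm (T (x τ)) (T (g τ))
    have h2 := hg τ (Ioo_subset_Icc_self hτ)
    nlinarith [norm_nonneg (T (x τ))]
  have h := hanti (left_mem_Icc.2 hst) (right_mem_Icc.2 hst) hst
  simp only at h
  refine (pow_le_pow_iff_left₀ (norm_nonneg _) (by positivity) two_ne_zero).1 ?_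
  rw [mul_pow, ← Real.exp_nat_mul]
  have he : Real.exp t * Real.exp (↑(2:ℕ) * (-(t - s) / 2)) = Real.exp s := by
    rw [← Real.exp_add]; congr 1; push_cast; ring
  have hp := Real.exp_pos t
  refine le_of_mul_le_mul_left ?_ hp
  rw [← mul_assoc, he]
  exact h

end abs

open Set Filter Topology in
theorem aux_main {E : Type} [NormedAddCommGroup E] [InnerProductSpace ℝ E] [CompleteSpace E]
    (L : ℕ → E →L[ℝ] E) (hL : Summable fun k => ‖L k‖)
    (η : ℕ → ℝ) (hη0 : ∀ j, 0 ≤ η j) (hηs : Summable η) (hη : ∑' j, η j ≤ 1 / 2)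
    (T : ℕ → E →L[ℝ] E) (Q : ℕ → ℝ) (hQ : ∀ k, 1 ≤ Q k)
    (hT : ∀ k x, ‖T k x‖ ≤ ‖x‖) (hTQ : ∀ k x, ‖x‖ ≤ Q k * ‖T k x‖)
    (hTL : ∀ k j, j ≠ k → ∀ x, ‖T k (L j x)‖ ≤ η j * ‖T k x‖) :
    ∃ F : E → E, F 0 = 0 ∧ ContDiff ℝ 1 F ∧
      (∃ C : NNReal, LipschitzWith C F) ∧
      HasFDerivAt F (-ContinuousLinearMap.id ℝ E + ∑' k, L k) 0 ∧
      (∀ x₀ : E, ∃ x : ℝ → E, x 0 = x₀ ∧ ∀ t : ℝ, HasDerivAt x (F (x t)) t) ∧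
      (∀ ε : ℝ, 0 < ε → ∃ δ : ℝ, 0 < δ ∧
        ∀ x : ℝ → E, (∀ t : ℝ, HasDerivAt x (F (x t)) t) → ‖x 0‖ < δ →
          ∀ t : ℝ, 0 ≤ t → ‖x t‖ < ε) ∧
      (∀ x : ℝ → E, (∀ t : ℝ, HasDerivAt x (F (x t)) t) →
        Filter.Tendsto x Filter.atTop (nhds 0)) := by
  obtain ⟨M, hM0, hM⟩ := rho_bound
  set a : ℕ → ℝ := fun k => 1 / (((k : ℝ) + 1) * Q (k + 1)) with ha
  have hQ0 : ∀ k, 0 < Q k := fun k => lt_of_lt_of_le one_pos (hQ k)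
  have ha0 : ∀ k, 0 < a k := fun k => by have := hQ0 (k + 1); simp only [ha]; positivity
  have haQ : ∀ k, Q (k + 1) * a k = 1 / ((k : ℝ) + 1) := fun k => by
    have := hQ0 (k + 1); simp only [ha]; field_simp
  have hale : ∀ k, a k ≤ 1 / ((k : ℝ) + 1) := fun k => by
    rw [← haQ k]
    have := hQ (k + 1)
    have := ha0 k
    nlinarith
  have hlim : Tendsto a atTop (𝓝 0) :=
    squeeze_zero (fun k => (ha0 k).le) hale tendsto_one_div_add_atTop_nhds_zero_nat
  set s : ℕ → ℝ := fun k => 1 / a k ^ 2 with hs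
  have hs0 : ∀ k, 0 ≤ s k := fun k => by simp only [hs]; positivity
  set f : ℕ → E → E := fun k x => rho (s k * ‖x‖ ^ 2) • L k x with hf
  have hu : Summable fun k => (1 + 2 * M) * ‖L k‖ := hL.mul_left _
  have hb : ∀ k x, ‖dterm (s k) (L k) x‖ ≤ (1 + 2 * M) * ‖L k‖ :=
    fun k x => dterm_bound M hM _ (hs0 k) _ x
  have hf0 : Summable fun k => f k 0 := by simp [hf, summable_zero]
  have hfd : ∀ x, HasFDerivAt (fun y => ∑' k, f k y) (∑' k, dterm (s k) (L k) x) x :=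
    fun x => hasFDerivAt_tsum hu (fun k x => dterm_hasFDerivAt (s k) (L k) x) hb hf0 x
  have hcont : Continuous fun x => ∑' k, dterm (s k) (L k) x :=
    continuous_tsum (fun k => dterm_continuous _ _) hu hb
  set F : E → E := fun x => -x + ∑' k, f k x with hF
  have hFd : ∀ x, HasFDerivAt F (-ContinuousLinearMap.id ℝ E + ∑' k, dterm (s k) (L k) x) x :=
    fun x => (hasFDerivAt_id x).neg.add (hfd x)
  have hF0 : F 0 = 0 := by simp [hF, hf]
  have hFC : ContDiff ℝ 1 F :=
    contDiff_one_iff_hasFDerivAt.2 ⟨_, continuous_const.add hcont, hFd⟩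
  have hsb : ∀ x, ‖-ContinuousLinearMap.id ℝ E + ∑' k, dterm (s k) (L k) x‖ ≤
      1 + ∑' k, (1 + 2 * M) * ‖L k‖ := by
    intro x
    refine (norm_add_le _ _).trans (add_le_add ?_ (tsum_of_norm_bounded hu.hasSum (hb · x)))
    rw [norm_neg]
    exact ContinuousLinearMap.norm_id_le
  have hC0 : 0 ≤ 1 + ∑' k, (1 + 2 * M) * ‖L k‖ := (norm_nonneg _).trans (hsb 0)
  set C : NNReal := ⟨_, hC0⟩ with hC
  have hFL : LipschitzWith C F := by
    refine lipschitzWith_of_nnnorm_fderiv_le (𝕜 := ℝ) (fun x => (hFd x).differentiableAt) ?_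
    intro x
    rw [(hFd x).fderiv]
    exact hsb x
  -- decay while outside the ball of radius `a k`
  have key : ∀ x : ℝ → E, (∀ t, HasDerivAt x (F (x t)) t) → ∀ k s' t, s' ≤ t →
      (∀ τ ∈ Icc s' t, a k ≤ ‖x τ‖) → ‖x t‖ ≤ Q k * Real.exp (-(t - s') / 2) * ‖x s'‖ := by
    intro x hx k s' t hst hxa
    have h1 := aux_decay (T k) x (fun τ => ∑' j, f j (x τ)) s' t hst hx (by
      intro τ hτ
      have hsum : Summable fun j => f j (x τ) := by
        refine Summable.of_norm_bounded (hL.mul_right ‖x τ‖) (fun j => ?_)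
        simp only [hf]
        rw [norm_smul, Real.norm_eq_abs, abs_of_nonneg (rho_nonneg _)]
        calc _ ≤ 1 * (‖L j‖ * ‖x τ‖) := by
              gcongr
              · exact rho_le_one _
              · exact (L j).le_opNorm _
          _ = _ := one_mul _
      rw [(T k).map_tsum hsum]
      have hsη : HasSum (fun j => η j * ‖T k (x τ)‖) ((∑' j, η j) * ‖T k (x τ)‖) :=
        hηs.hasSum.mul_right _
      refine (tsum_of_norm_bounded hsη ?_).trans (by gcongr)
      intro j
      simp only [hf]
      rw [map_smul, norm_smul, Real.norm_eq_abs, abs_of_nonneg (rho_nonneg _)]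
      by_cases hjk : j = k
      · subst hjk
        rw [rho_zero_of, zero_mul]
        · exact mul_nonneg (hη0 _) (norm_nonneg _)
        · have := hxa τ hτ
          have h0 := ha0 j
          simp only [hs]
          rw [one_div, inv_mul_eq_div, le_div_iff₀ (by positivity), one_mul]
          gcongr
      · calc _ ≤ 1 * (η j * ‖T k (x τ)‖) := by
              gcongr
              · exact rho_le_one _
              · exact hTL k j hjk _
          _ = _ := one_mul _)
    calc ‖x t‖ ≤ Q k * ‖T k (x t)‖ := hTQ k _
      _ ≤ Q k * (Real.exp (-(t - s') / 2) * ‖T k (x s')‖) := by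
        have := (hQ0 k).le; gcongr
      _ ≤ Q k * (Real.exp (-(t - s') / 2) * ‖x s'‖) := by
        have := (hQ0 k).le
        gcongr
        exact hT k _
      _ = _ := by ring
  have hxc : ∀ x : ℝ → E, (∀ t, HasDerivAt x (F (x t)) t) → Continuous x := fun x hx =>
    continuous_iff_continuousAt.2 fun t => (hx t).continuousAt
  -- once in the ball of radius `a K`, stay in the ball of radius `1/(K+1)`
  have stay : ∀ x : ℝ → E, (∀ t, HasDerivAt x (F (x t)) t) → ∀ K t₀, ‖x t₀‖ ≤ a K →
      ∀ t, t₀ ≤ t → ‖x t‖ ≤ 1 / ((K : ℝ) + 1) := by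
    intro x hx K t₀ h0 t ht
    by_cases hz : ∃ τ ∈ Icc t₀ t, x τ = 0
    · obtain ⟨τ, hτ, hxτ⟩ := hz
      have := ODE_solution_unique (v := fun _ => F) (fun _ => hFL) (f := x) (g := fun _ => 0)
        (a := τ) (b := t) (hxc x hx).continuousOn (fun r _ => (hx r).hasDerivWithinAt)
        continuousOn_const
        (fun r _ => by simp only [hF0]; exact hasDerivWithinAt_const _ _ _) hxτ
        (right_mem_Icc.2 hτ.2)
      rw [this, norm_zero]; positivity
    · push Not at hz
      obtain ⟨τm, hτm, hmin⟩ := (isCompact_Icc (a := t₀) (b := t)).exists_isMinOn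
        (nonempty_Icc.2 ht) (hxc x hx).norm.continuousOn
      have hpos : 0 < ‖x τm‖ := norm_pos_iff.2 (hz _ hτm)
      -- the set of levels reached
      have hfin : ∃ N, ∀ k ≥ N, a k < ‖x τm‖ := by
        have := (hlim.eventually (gt_mem_nhds hpos))
        exact eventually_atTop.1 this
      obtain ⟨N, hN⟩ := hfin
      let P : ℕ → Prop := fun k => K ≤ k ∧ ∃ τ ∈ Icc t₀ t, ‖x τ‖ ≤ a k
      have hPK : P K := ⟨le_rfl, t₀, left_mem_Icc.2 ht, h0⟩
      classical
      have hPN : ∀ k, P k → k ≤ N := by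
        rintro k ⟨_, τ, hτ, hle⟩
        by_contra hcon
        have h1 := hN k (by omega)
        have h2 : ‖x τm‖ ≤ ‖x τ‖ := hmin hτ
        linarith
      have hk := Nat.findGreatest_spec (P := P) (hPN K hPK) hPK
      set k := Nat.findGreatest P N with hkd
      obtain ⟨hKk, τ, hτ, hle⟩ := hk
      have hnext : ∀ r ∈ Icc τ t, a (k + 1) ≤ ‖x r‖ := by
        intro r hr
        by_contra hcon
        have hP1 : P (k + 1) := ⟨by omega, r, ⟨hτ.1.trans hr.1, hr.2⟩, (not_le.1 hcon).le⟩
        have := Nat.le_findGreatest (hPN _ hP1) hP1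
        omega
      have h1 := key x hx (k + 1) τ t hτ.2 hnext
      have hexp : Real.exp (-(t - τ) / 2) ≤ 1 := Real.exp_le_one_iff.2 (by linarith [hτ.2])
      have hQk := (hQ0 (k + 1)).le
      calc ‖x t‖ ≤ _ := h1
        _ ≤ Q (k + 1) * 1 * a k := by gcongr
        _ = 1 / ((k : ℝ) + 1) := by rw [mul_one, haQ]
        _ ≤ 1 / ((K : ℝ) + 1) := by
          have : (K : ℝ) ≤ k := by exact_mod_cast hKk
          gcongr
  refine ⟨F, hF0, hFC, ⟨C, hFL⟩, ?_, aux_global F hF0 hFC C hFL, ?_, ?_⟩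
  · have := hFd 0
    simpa only [dterm_zero] using this
  · intro ε hε
    obtain ⟨K, hK⟩ := exists_nat_one_div_lt hε
    exact ⟨a K, ha0 K, fun x hx h0 t ht => (stay x hx K 0 h0.le t ht).trans_lt hK⟩
  · intro x hx
    rw [Metric.tendsto_atTop]
    intro ε hε
    obtain ⟨K, hK⟩ := exists_nat_one_div_lt hε
    have hreach : ∃ t₀, ‖x t₀‖ ≤ a K := by
      by_contra! hcon
      have hb : ∀ t, 0 ≤ t → a K ≤ Q K * Real.exp (-(t - 0) / 2) * ‖x 0‖ := fun t ht =>
        (hcon t).le.trans (key x hx K 0 t ht fun τ _ => (hcon τ).le)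
      have hl : Tendsto (fun t : ℝ => Q K * Real.exp (-(t - 0) / 2) * ‖x 0‖) atTop
          (𝓝 (Q K * 0 * ‖x 0‖)) := by
        refine Tendsto.mul_const _ (Tendsto.const_mul _ ?_)
        refine Real.tendsto_exp_atBot.comp ?_
        have h2 : Tendsto (fun t : ℝ => t / 2) atTop atTop :=
          tendsto_id.atTop_div_const (by norm_num)
        refine (tendsto_neg_atTop_atBot.comp h2).congr fun t => ?_
        simp; ring
      have := ge_of_tendsto hl ((eventually_ge_atTop 0).mono hb)
      have := ha0 K
      simp at *
      linarith
    obtain ⟨t₀, ht₀⟩ := hreach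
    refine ⟨t₀, fun t ht => ?_⟩
    rw [dist_zero_right]
    exact (stay x hx K t₀ ht₀ t ht).trans_lt hK

theorem H_summable (x : H) : Summable fun n => ‖x n‖ ^ 2 := by
  have := (lp.memℓp x).summable (by norm_num)
  simpa using this

theorem H_norm_sq (x : H) : ‖x‖ ^ 2 = ∑' n, ‖x n‖ ^ 2 := by
  have := lp.norm_rpow_eq_tsum (p := 2) (by norm_num) x
  simpa using this

theorem H_norm_le_diag (x y : H) (c : ℝ) (hc : 0 ≤ c) (h : ∀ n, ‖y n‖ ≤ c * ‖x n‖) :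
    ‖y‖ ≤ c * ‖x‖ := by
  refine (pow_le_pow_iff_left₀ (norm_nonneg _) (by positivity) two_ne_zero).1 ?_
  rw [mul_pow, H_norm_sq, H_norm_sq, ← tsum_mul_left]
  refine (H_summable y).tsum_le_tsum (fun n => ?_) ((H_summable x).mul_left _)
  rw [← mul_pow]
  gcongr
  exact h n

theorem H_norm_le_shift (x y : H) (c : ℝ) (hc : 0 ≤ c) (h0 : y 0 = 0)
    (h : ∀ n, ‖y (n + 1)‖ ≤ c * ‖x n‖) : ‖y‖ ≤ c * ‖x‖ := by
  refine (pow_le_pow_iff_left₀ (norm_nonneg _) (by positivity) two_ne_zero).1 ?_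
  rw [mul_pow, H_norm_sq, H_norm_sq, ← tsum_mul_left, (H_summable y).tsum_eq_zero_add, h0]
  simp only [norm_zero, ne_eq, OfNat.ofNat_ne_zero, not_false_eq_true, zero_pow, zero_add]
  refine ((summable_nat_add_iff 1).2 (H_summable y)).tsum_le_tsum (fun n => ?_)
    ((H_summable x).mul_left _)
  rw [← mul_pow]
  gcongr
  exact h n

def shiftFun (w : ℕ → ℝ) (x : ℕ → ℂ) : ℕ → ℂ
  | 0 => 0
  | n + 1 => (w n : ℂ) * x n

theorem shiftFun_mem (w : ℕ → ℝ) (B : ℝ) (hw : ∀ n, |w n| ≤ B) (x : H) :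
    Memℓp (E := fun _ : ℕ => ℂ) (shiftFun w x) 2 := by
  have : Summable fun n => ‖shiftFun w x n‖ ^ 2 := by
    rw [← summable_nat_add_iff 1]
    refine Summable.of_nonneg_of_le (fun n => by positivity) (fun n => ?_)
      ((H_summable x).mul_left (B ^ 2))
    simp only [shiftFun, norm_mul, Complex.norm_real, Real.norm_eq_abs, mul_pow]
    have := hw n
    gcongr
  refine memℓp_gen ?_
  simpa using this

theorem diagFun_mem (w : ℕ → ℝ) (B : ℝ) (hw : ∀ n, |w n| ≤ B) (x : H) :
    Memℓp (E := fun _ : ℕ => ℂ) (fun n => (w n : ℂ) * x n) 2 := by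
  have : Summable fun n => ‖(w n : ℂ) * x n‖ ^ 2 := by
    refine Summable.of_nonneg_of_le (fun n => by positivity) (fun n => ?_)
      ((H_summable x).mul_left (B ^ 2))
    simp only [norm_mul, Complex.norm_real, Real.norm_eq_abs, mul_pow]
    have := hw n
    gcongr
  refine memℓp_gen ?_
  simpa using this

def shiftOp (w : ℕ → ℝ) (B : ℝ) (hw : ∀ n, |w n| ≤ B) : H →L[ℂ] H :=
  LinearMap.mkContinuous
    { toFun := fun x => ⟨shiftFun w x, shiftFun_mem w B hw x⟩
      map_add' := by
        intro x y
        ext n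
        cases n with
        | zero => change (0 : ℂ) = 0 + 0; simp
        | succ n => change (w n : ℂ) * (x n + y n) = w n * x n + w n * y n; ring
      map_smul' := by
        intro c x
        ext n
        cases n with
        | zero => simp [shiftFun]
        | succ n => simp [shiftFun, mul_left_comm] } B (by
    intro x
    refine H_norm_le_shift x _ B ((abs_nonneg _).trans (hw 0)) rfl (fun n => ?_)
    have := hw n
    simp only [LinearMap.coe_mk, AddHom.coe_mk, shiftFun, norm_mul, Complex.norm_real,
      Real.norm_eq_abs]
    gcongr)

theorem shiftOp_zero (w : ℕ → ℝ) (B : ℝ) (hw : ∀ n, |w n| ≤ B) (x : H) :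
    shiftOp w B hw x 0 = 0 := rfl
theorem shiftOp_succ (w : ℕ → ℝ) (B : ℝ) (hw : ∀ n, |w n| ≤ B) (x : H) (n : ℕ) :
    shiftOp w B hw x (n + 1) = (w n : ℂ) * x n := rfl
theorem shiftOp_norm (w : ℕ → ℝ) (B : ℝ) (hw : ∀ n, |w n| ≤ B) : ‖shiftOp w B hw‖ ≤ B :=
  LinearMap.mkContinuous_norm_le _ ((abs_nonneg _).trans (hw 0)) _

def diagOp (w : ℕ → ℝ) (B : ℝ) (hw : ∀ n, |w n| ≤ B) : H →L[ℂ] H :=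
  LinearMap.mkContinuous
    { toFun := fun x => ⟨fun n => (w n : ℂ) * x n, diagFun_mem w B hw x⟩
      map_add' := by
        intro x y
        ext n
        change (w n : ℂ) * (x n + y n) = w n * x n + w n * y n
        ring
      map_smul' := by
        intro c x
        ext n
        simp [mul_left_comm] } B (by
    intro x
    refine H_norm_le_diag x _ B ((abs_nonneg _).trans (hw 0)) (fun n => ?_)
    have := hw n
    simp only [LinearMap.coe_mk, AddHom.coe_mk, norm_mul, Complex.norm_real,
      Real.norm_eq_abs]
    gcongr)

theorem diagOp_apply (w : ℕ → ℝ) (B : ℝ) (hw : ∀ n, |w n| ≤ B) (x : H) (n : ℕ) :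
    diagOp w B hw x n = (w n : ℂ) * x n := rfl

def wt (j n : ℕ) : ℝ := if padicValNat 2 (n + 1) = j then 4 * (1 / 2) ^ j else 0

theorem wt_nonneg (j n : ℕ) : 0 ≤ wt j n := by unfold wt; split_ifs <;> positivity
theorem wt_le (j n : ℕ) : |wt j n| ≤ 4 * (1 / 2) ^ j := by
  rw [abs_of_nonneg (wt_nonneg j n)]
  unfold wt; split_ifs
  · exact le_rfl
  · positivity

def LL (j : ℕ) : H →L[ℂ] H := shiftOp (wt j) _ (wt_le j)

def dg (k n : ℕ) : ℝ := (1 / 16) ^ ((n + 2 ^ k) % 2 ^ (k + 1))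

theorem dg_pos (k n : ℕ) : 0 < dg k n := by unfold dg; positivity
theorem dg_le (k n : ℕ) : |dg k n| ≤ 1 := by
  rw [abs_of_pos (dg_pos k n)]
  exact pow_le_one₀ (by norm_num) (by norm_num)

theorem dg_succ (k n : ℕ) (h : padicValNat 2 (n + 1) ≠ k) : dg k (n + 1) = 1 / 16 * dg k n := by
  have h1 : (n + 1 + 2 ^ k) % 2 ^ (k + 1) = (n + 2 ^ k) % 2 ^ (k + 1) + 1 := by
    have h2 : ¬ 2 ^ (k + 1) ∣ (n + 2 ^ k) + 1 := by
      intro hd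
      apply h
      have hk : 2 ^ k ∣ n + 1 := by
        have h3 : 2 ^ k ∣ (n + 1) + 2 ^ k := by
          have := (pow_dvd_pow 2 (Nat.le_succ k)).trans hd
          rwa [show n + 1 + 2 ^ k = n + 2 ^ k + 1 by ring]
        exact (Nat.dvd_add_left dvd_rfl).1 h3
      have hk1 : ¬ 2 ^ (k + 1) ∣ n + 1 := by
        intro h4
        have h5 : 2 ^ (k + 1) ∣ 2 ^ k := by
          refine (Nat.dvd_add_right h4).1 ?_
          rwa [show n + 1 + 2 ^ k = n + 2 ^ k + 1 by ring]
        have := Nat.le_of_dvd (by positivity) h5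
        have : 2 ^ k < 2 ^ (k + 1) := Nat.pow_lt_pow_right (by norm_num) (by omega)
        omega
      rw [padicValNat_dvd_iff_le (by omega)] at hk hk1
      omega
    rw [show n + 1 + 2 ^ k = n + 2 ^ k + 1 by ring]
    have hm : 0 < 2 ^ (k + 1) := by positivity
    generalize 2 ^ (k + 1) = m at h2 hm ⊢
    generalize n + 2 ^ k = b at h2 ⊢
    have e := Nat.div_add_mod b m
    have l := Nat.mod_lt b hm
    have hlt : b % m + 1 < m := by
      rcases Nat.lt_or_ge (b % m + 1) m with h | h
      · exact h
      · exfalso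
        apply h2
        have : b % m + 1 = m := by omega
        refine ⟨b / m + 1, ?_⟩
        rw [mul_add, mul_one]
        omega
    rw [show b + 1 = m * (b / m) + (b % m + 1) by omega, Nat.mul_add_mod, Nat.mod_eq_of_lt hlt]
  unfold dg
  rw [h1, pow_succ]; ring

def TT (k : ℕ) : H →L[ℂ] H := diagOp (dg k) 1 (dg_le k)

theorem TT_norm (k : ℕ) (x : H) : ‖TT k x‖ ≤ ‖x‖ := by
  have := H_norm_le_diag x (TT k x) 1 zero_le_one (fun n => by
    have := dg_le k n
    rw [TT, diagOp_apply, norm_mul, Complex.norm_real, Real.norm_eq_abs]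
    gcongr)
  simpa using this

theorem TT_lower (k : ℕ) (x : H) : ‖x‖ ≤ 16 ^ (2 ^ (k + 1)) * ‖TT k x‖ := by
  refine H_norm_le_diag (TT k x) x _ (by positivity) (fun n => ?_)
  rw [TT, diagOp_apply, norm_mul, Complex.norm_real, Real.norm_eq_abs, abs_of_pos (dg_pos k n),
    ← mul_assoc]
  refine le_mul_of_one_le_left (norm_nonneg _) ?_
  unfold dg
  rw [one_div, inv_pow, ← div_eq_mul_inv, le_div_iff₀ (by positivity), one_mul]
  exact pow_le_pow_right₀ (by norm_num) (Nat.mod_lt _ (by positivity)).le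

theorem TT_LL (k j : ℕ) (hjk : j ≠ k) (x : H) :
    ‖TT k (LL j x)‖ ≤ (1 / 4 * (1 / 2) ^ j) * ‖TT k x‖ := by
  refine H_norm_le_shift (TT k x) _ _ (by positivity) ?_ (fun n => ?_)
  · rw [TT, diagOp_apply, LL, shiftOp_zero, mul_zero]
  · rw [TT, diagOp_apply, diagOp_apply, LL, shiftOp_succ]
    simp only [norm_mul, Complex.norm_real, Real.norm_eq_abs]
    by_cases h : padicValNat 2 (n + 1) = j
    · rw [dg_succ k n (by rw [h]; exact hjk), abs_of_nonneg (wt_nonneg j n), abs_mul]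
      simp only [wt, if_pos h]
      rw [abs_of_pos (by norm_num : (0:ℝ) < 1 / 16)]
      apply le_of_eq; ring
    · simp only [wt, if_neg h, abs_zero, zero_mul, mul_zero]
      positivity

theorem geo_summable (c : ℝ) : Summable fun j : ℕ => c * (1 / 2 : ℝ) ^ j :=
  (summable_geometric_of_lt_one (by norm_num) (by norm_num)).mul_left c

theorem LL_norm (j : ℕ) : ‖LL j‖ ≤ 4 * (1 / 2) ^ j := shiftOp_norm _ _ _

theorem LL_summable_norm : Summable fun j => ‖LL j‖ :=
  Summable.of_nonneg_of_le (fun _ => norm_nonneg _) LL_norm (geo_summable 4)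

def WW : H →L[ℂ] H := ∑' j, LL j

theorem WW_coord (x : H) (n : ℕ) : HasSum (fun j => LL j x n) (WW x n) := by
  have h : HasSum LL WW := LL_summable_norm.of_norm.hasSum
  have h1 := h.mapL (ContinuousLinearMap.apply ℂ H x)
  have h2 := h1.mapL (lp.evalCLM ℂ (fun _ : ℕ => ℂ) 2 n)
  exact h2

theorem WW_zero (x : H) : WW x 0 = 0 := by
  have := WW_coord x 0
  simp only [LL, shiftOp_zero] at this
  exact this.unique hasSum_zero

theorem WW_succ (x : H) (n : ℕ) :
    WW x (n + 1) = ((4 * (1 / 2) ^ padicValNat 2 (n + 1) : ℝ) : ℂ) * x n := by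
  have := WW_coord x (n + 1)
  simp only [LL, shiftOp_succ] at this
  have h2 := hasSum_single (f := fun j => (wt j n : ℂ) * x n) (padicValNat 2 (n + 1)) (by
    intro j hj
    simp [wt, hj.symm])
  rw [this.unique h2]
  simp [wt]

theorem fact_val_le (n : ℕ) : padicValNat 2 n.factorial ≤ n := by
  have := sub_one_mul_padicValNat_factorial (p := 2) n
  omega

theorem one_mem_spec : (1 : ℂ) ∈ spectrum ℂ (-ContinuousLinearMap.id ℂ H + WW) := by
  rw [spectrum.mem_iff]
  intro hu
  obtain ⟨u, hu⟩ := hu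
  set x : H := (↑u⁻¹ : H →L[ℂ] H) (lp.single 2 0 1) with hx
  have hux : (u : H →L[ℂ] H) x = lp.single 2 0 1 := by
    rw [hx, ← mul_apply_eq_comp, Units.mul_inv]; rfl
  rw [hu] at hux
  have hc : ∀ n, 2 * x n - WW x n = (lp.single 2 0 1 : H) n := by
    intro n
    rw [← hux]
    simp [two_mul, Algebra.algebraMap_eq_smul_one]
    ring
  have h0 : x 0 = 1 / 2 := by
    have := hc 0
    rw [WW_zero] at this
    simp at this
    linear_combination this / 2
  have hs : ∀ n, x (n + 1) = 2 * ((1 / 2) ^ padicValNat 2 (n + 1) : ℂ) * x n := by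
    intro n
    have := hc (n + 1)
    rw [WW_succ] at this
    simp at this
    simp
    linear_combination this / 2
  have hn : ∀ n, ‖x n‖ = 1 / 2 * 2 ^ n * (1 / 2) ^ padicValNat 2 n.factorial := by
    intro n
    induction n with
    | zero => simp [h0]
    | succ n ih =>
      rw [hs, norm_mul, ih, Nat.factorial_succ,
        padicValNat.mul (by omega) (Nat.factorial_ne_zero n)]
      simp [pow_add, pow_succ]
      ring
  have hge : ∀ n, 1 / 2 ≤ ‖x n‖ := by
    intro n
    rw [hn]
    have h1 : ((1:ℝ) / 2) ^ n ≤ (1 / 2) ^ padicValNat 2 n.factorial :=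
      pow_le_pow_of_le_one (by norm_num) (by norm_num) (fact_val_le n)
    calc (1:ℝ) / 2 = 1 / 2 * 2 ^ n * (1 / 2) ^ n := by
          rw [mul_assoc, ← mul_pow]; norm_num
      _ ≤ _ := by gcongr
  have ht := (H_summable x).tendsto_atTop_zero
  have := ge_of_tendsto' ht (b := 1 / 4) (fun n => by nlinarith [hge n])
  norm_num at this

/-- Main theorem: there is a Fréchet-$C^1$ map $F : ℓ² → ℓ²$ with
$F(0) = 0$ whose linearization $DF(0)$ has spectrum meeting the half-plane
$\mathrm{Re}(z) > 0$, yet the origin is globally asymptotically stable in the sense of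
Lyapunov for the flow of $x' = F(x)$; moreover $F$ is globally Lipschitz, so the flow
is globally defined for all $t ∈ ℝ$. -/
theorem stmt18 :
    ∃ F : H → H, F 0 = 0 ∧ ContDiff ℝ 1 F ∧
      (∃ C : NNReal, LipschitzWith C F) ∧
      (∃ A : H →L[ℂ] H, fderiv ℝ F 0 = A.restrictScalars ℝ ∧
        ∃ z ∈ spectrum ℂ A, 0 < z.re) ∧
      (∀ x₀ : H, ∃ x : ℝ → H, x 0 = x₀ ∧ ∀ t : ℝ, HasDerivAt x (F (x t)) t) ∧
      (∀ ε : ℝ, 0 < ε → ∃ δ : ℝ, 0 < δ ∧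
        ∀ x : ℝ → H, (∀ t : ℝ, HasDerivAt x (F (x t)) t) → ‖x 0‖ < δ →
          ∀ t : ℝ, 0 ≤ t → ‖x t‖ < ε) ∧
      (∀ x : ℝ → H, (∀ t : ℝ, HasDerivAt x (F (x t)) t) →
        Filter.Tendsto x Filter.atTop (nhds 0)) := by
  have hsum : Summable fun j => ‖(LL j).restrictScalars ℝ‖ := by
    simpa only [ContinuousLinearMap.norm_restrictScalars] using LL_summable_norm
  obtain ⟨F, h0, h1, h2, h3, h4, h5, h6⟩ := aux_main (E := H)
    (fun j => (LL j).restrictScalars ℝ) hsum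
    (fun j => 1 / 4 * (1 / 2) ^ j) (fun j => by positivity) (geo_summable _)
    (by rw [tsum_mul_left, tsum_geometric_two]; norm_num)
    (fun k => (TT k).restrictScalars ℝ) (fun k => 16 ^ (2 ^ (k + 1)))
    (fun k => one_le_pow₀ (by norm_num)) TT_norm TT_lower TT_LL
  refine ⟨F, h0, h1, h2, ⟨-ContinuousLinearMap.id ℂ H + WW, ?_, 1, one_mem_spec, by simp⟩,
    h4, h5, h6⟩
  rw [h3.fderiv]
  ext1 x
  have e1 := hsum.of_norm.hasSum.mapL (ContinuousLinearMap.apply ℝ H x)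
  have e2 := (LL_summable_norm.of_norm.hasSum).mapL (ContinuousLinearMap.apply ℂ H x)
  have e3 := e1.unique e2
  change -x + (∑' j, (LL j).restrictScalars ℝ) x = -x + (∑' j, LL j) x
  congr 1
end
end
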